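/- Let (A,[·,·],▷,α,β) be a regular BiHom-post-Lie algebra over a field K of characteristic zero. Define a bracket on A × A by ⟦(a,x),(b,y)⟧ = (a ▷ b − α⁻¹β(b) ▷ αβ⁻¹(a) + [a,b], a ▷ y − α⁻¹β(b) ▷ αβ⁻¹(x) + [x,y]). Then (A × A, ⟦·,·⟧, α×α, β×β) is a BiHom-Lie algebra. -/

import Mathlib

section Defs

variable (K : Type*) [Field K]
variable {A V : Type*} [AddCommGroup A] [Module K A] [AddCommGroup V] [Module K V]

/-- `f : A → A → V` is bilinear over `K`. -/
def IsBilin (f : A → A → V) : Prop :=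
  (∀ y, IsLinearMap K fun x => f x y) ∧ (∀ x, IsLinearMap K fun y => f x y)

/-- `b` is a Lie bracket on `A`. -/
def IsLieBracket (b : A → A → A) : Prop :=
  IsBilin K b ∧ (∀ x y, b x y = - b y x) ∧
    (∀ x y z, b x (b y z) + b y (b z x) + b z (b x y) = 0)

/-- `(A, b, t)` is a (left) post-Lie algebra. -/
def IsPostLie (b t : A → A → A) : Prop :=
  IsLieBracket K b ∧ IsBilin K t ∧
    (∀ x y z, t x (b y z) = b (t x y) z + b y (t x z)) ∧
    (∀ x y z, t (b x y) z =
      (t x (t y z) - t (t x y) z) - (t y (t x z) - t (t y x) z))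

/-- `ρ` is a representation of the Lie algebra `(A, b)` on `V`. -/
def IsLieRep (b : A → A → A) (ρ : A → V → V) : Prop :=
  (∀ x, IsLinearMap K (ρ x)) ∧ (∀ v, IsLinearMap K fun x => ρ x v) ∧
    (∀ x y v, ρ (b x y) v = ρ x (ρ y v) - ρ y (ρ x v))

/-- `(A, b, α, β)` is a BiHom-Lie algebra. -/
def IsBiHomLie (b : A → A → A) (α β : A → A) : Prop :=
  IsBilin K b ∧ IsLinearMap K α ∧ IsLinearMap K β ∧
    (∀ x, α (β x) = β (α x)) ∧
    (∀ x y, α (b x y) = b (α x) (α y)) ∧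
    (∀ x y, β (b x y) = b (β x) (β y)) ∧
    (∀ x y, b (β x) (α y) = - b (β y) (α x)) ∧
    (∀ x y z, b (β (β x)) (b (β y) (α z)) + b (β (β y)) (b (β z) (α x)) +
        b (β (β z)) (b (β x) (α y)) = 0)

/-- `(V, ρ, φ, ψ)` is a representation of the BiHom-Lie algebra `(A, b, α, β)`. -/
def IsBiHomRep (b : A → A → A) (α β : A → A) (ρ : A → V → V) (φ ψ : V → V) : Prop :=
  IsLinearMap K φ ∧ IsLinearMap K ψ ∧ (∀ v, φ (ψ v) = ψ (φ v)) ∧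
    (∀ x, IsLinearMap K (ρ x)) ∧ (∀ v, IsLinearMap K fun x => ρ x v) ∧
    (∀ x v, ρ (α x) (φ v) = φ (ρ x v)) ∧
    (∀ x v, ρ (β x) (ψ v) = ψ (ρ x v)) ∧
    (∀ x y v, ρ (b (β x) y) (ψ v) = ρ (α (β x)) (ρ y v) - ρ (β y) (ρ (α x) v))

/-- `(A, b, t, α, β)` is a (left) BiHom-post-Lie algebra. -/
def IsBiHomPostLie (b t : A → A → A) (α β : A → A) : Prop :=
  IsBiHomLie K b α β ∧ IsBilin K t ∧
    (∀ x y, α (t x y) = t (α x) (α y)) ∧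
    (∀ x y, β (t x y) = t (β x) (β y)) ∧
    (∀ x y z, t (α (β x)) (b y z) = b (t (β x) y) (β z) + b (β y) (t (α x) z)) ∧
    (∀ x y z, t (b (β x) (α y)) (β z) =
      (t (α (β x)) (t (α y) z) - t (t (β x) (α y)) (β z)) -
      (t (α (β y)) (t (α x) z) - t (t (β y) (α x)) (β z)))

/-- `(V, bv, ρ, φ, ψ)` is an `A`-module `K`-algebra over the BiHom-Lie algebra
`(A, b, α, β)`. -/
def IsModuleKAlgebra (b : A → A → A) (α β : A → A) (bv : V → V → V)
    (ρ : A → V → V) (φ ψ : V → V) : Prop :=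
  IsBiHomLie K bv φ ψ ∧ IsBiHomRep K b α β ρ φ ψ ∧
    (∀ x u v, ρ (α (β x)) (bv u v) = bv (ρ (β x) u) (ψ v) + bv (ψ u) (ρ (α x) v))

end Defs

/-!
Replacing a bilinear operation `f x y` by `f (φ x) (ψ y)`, for endomorphisms `φ` and `ψ` commuting
with each other and with the structure maps, turns BiHom-(post-)Lie algebras with structure maps
`α`, `β` into ones with structure maps `α ∘ φ`, `β ∘ ψ`. With `φ = α⁻¹` and `ψ = β⁻¹`, a regular
BiHom-post-Lie algebra becomes an ordinary post-Lie algebra. There `▷` is an action by derivations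
of the Lie algebra `(A, x ▷ y - y ▷ x + [x, y])` on the Lie algebra `(A, [·,·])`, so that `A × A`
carries a semidirect product Lie bracket. Twisting it back by `α × α` and `β × β` gives `⟦·,·⟧`.
-/

open Function (Commute Semiconj₂ LeftInverse RightInverse bicompl)

section Semiconj

variable {X : Type*} {f : X → X → X} {χ χ' φ ψ : X → X}

theorem semiconj₂_bicompl (hf : Semiconj₂ χ f f) (hφ : Commute χ φ) (hψ : Commute χ ψ) :
    Semiconj₂ χ (bicompl f φ ψ) (bicompl f φ ψ) :=
  fun x y => by simp only [Function.bicompl, hf.eq, hφ.eq, hψ.eq]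

theorem semiconj₂_of_inverse (hf : Semiconj₂ χ f f) (hl : LeftInverse χ' χ)
    (hr : RightInverse χ' χ) : Semiconj₂ χ' f f := fun x y => by
  rw [← hl (f (χ' x) (χ' y)), hf.eq, hr x, hr y]

end Semiconj

section Linear

variable {K A B V W : Type*} [Field K] [AddCommGroup A] [Module K A] [AddCommGroup B] [Module K B]
  [AddCommGroup V] [Module K V] [AddCommGroup W] [Module K W]

theorem isLinearMap_prodMap {f : A → V} {g : B → W} (hf : IsLinearMap K f)
    (hg : IsLinearMap K g) : IsLinearMap K (Prod.map f g) :=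
  ((hf.mk' f).prodMap (hg.mk' g)).isLinear

theorem IsBilin.bicompl {f : A → A → V} {φ ψ : B → A} (hf : IsBilin K f)
    (hφ : IsLinearMap K φ) (hψ : IsLinearMap K ψ) : IsBilin K (bicompl f φ ψ) :=
  ⟨fun y => ((hf.1 (ψ y)).mk' _ ∘ₗ hφ.mk' φ).isLinear,
    fun x => ((hf.2 (φ x)).mk' _ ∘ₗ hψ.mk' ψ).isLinear⟩

end Linear

section Twist

variable {K A : Type*} [Field K] [AddCommGroup A] [Module K A]

variable (K) in
/-- Linear maps `φ`, `ψ` commuting with each other and with `α`, `β`: the pairs along which an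
operation with structure maps `α`, `β` may be twisted. Multiplicativity of `φ` and `ψ` is kept
separate, since it depends on the operation. -/
structure IsTwistingPair (α β φ ψ : A → A) : Prop where
  linear_left : IsLinearMap K φ
  linear_right : IsLinearMap K ψ
  commute : Commute φ ψ
  commute_left_α : Commute φ α
  commute_left_β : Commute φ β
  commute_right_α : Commute ψ α
  commute_right_β : Commute ψ β

variable {b t : A → A → A} {α β φ ψ α' β' : A → A}

theorem isTwistingPair_id (hα : IsLinearMap K α) (hβ : IsLinearMap K β) (hαβ : Commute α β) :
    IsTwistingPair K id id α β :=
  ⟨hα, hβ, hαβ, .id_right, .id_right, .id_right, .id_right⟩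

theorem isTwistingPair_inverse (hα : IsLinearMap K α) (hβ : IsLinearMap K β) (hαβ : Commute α β)
    (hα'l : LeftInverse α' α) (hα'r : RightInverse α' α)
    (hβ'l : LeftInverse β' β) (hβ'r : RightInverse β' β) : IsTwistingPair K α β α' β' := by
  have hβα' : Commute β α' := hαβ.symm.semiconj.inverses_right hα'r hα'l
  have hαβ' : Commute α β' := hαβ.semiconj.inverses_right hβ'r hβ'l
  have hα'β' : Commute α' β' := hβα'.symm.semiconj.inverses_right hβ'r hβ'l
  have hα'α : Commute α' α := fun x => (hα'l x).trans (hα'r x).symm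
  have hβ'β : Commute β' β := fun x => (hβ'l x).trans (hβ'r x).symm
  exact ⟨((hα.mk' α).inverse α' hα'l hα'r).isLinear, ((hβ.mk' β).inverse β' hβ'l hβ'r).isLinear,
    hα'β', hα'α, hβα'.symm, hαβ'.symm, hβ'β⟩

theorem IsTwistingPair.semiconj₂_comp_left (h : IsTwistingPair K α β φ ψ)
    (hα : Semiconj₂ α b b) (hφ : Semiconj₂ φ b b) :
    Semiconj₂ (α ∘ φ) (bicompl b φ ψ) (bicompl b φ ψ) :=
  semiconj₂_bicompl (hα.comp hφ) (h.commute_left_α.symm.comp_left (.refl φ))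
    (h.commute_right_α.symm.comp_left h.commute)

theorem IsTwistingPair.semiconj₂_comp_right (h : IsTwistingPair K α β φ ψ)
    (hβ : Semiconj₂ β b b) (hψ : Semiconj₂ ψ b b) :
    Semiconj₂ (β ∘ ψ) (bicompl b φ ψ) (bicompl b φ ψ) :=
  semiconj₂_bicompl (hβ.comp hψ) (h.commute_left_β.symm.comp_left h.commute.symm)
    (h.commute_right_β.symm.comp_left (.refl ψ))

theorem IsBiHomLie.twist (h : IsBiHomLie K b α β) (htw : IsTwistingPair K α β φ ψ)
    (hφb : Semiconj₂ φ b b) (hψb : Semiconj₂ ψ b b) :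
    IsBiHomLie K (bicompl b φ ψ) (α ∘ φ) (β ∘ ψ) := by
  obtain ⟨hb, hα, hβ, hαβ, hαb, hβb, hskew, hjacobi⟩ := h
  have ⟨hφ, hψ, hφψ, hφα, hφβ, hψα, hψβ⟩ := htw
  refine ⟨hb.bicompl hφ hψ, (hα.mk' α ∘ₗ hφ.mk' φ).isLinear, (hβ.mk' β ∘ₗ hψ.mk' ψ).isLinear,
    fun x => ?_, htw.semiconj₂_comp_left hαb hφb, htw.semiconj₂_comp_right hβb hψb,
    fun x y => ?_, fun x y z => ?_⟩
  · simp only [Function.comp_apply, hφβ.eq, hφψ.eq, hψα.eq, hαβ]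
  · simpa only [Function.bicompl, Function.comp_apply, hφα.eq, hφβ.eq, hφψ.eq, hψα.eq, hψβ.eq]
      using hskew (φ (ψ x)) (φ (ψ y))
  · simpa only [Function.bicompl, Function.comp_apply, hψb.eq, hφα.eq, hφβ.eq, hφψ.eq, hψα.eq,
      hψβ.eq] using hjacobi (φ (ψ (ψ x))) (φ (ψ (ψ y))) (φ (ψ (ψ z)))

theorem IsBiHomPostLie.twist (h : IsBiHomPostLie K b t α β) (htw : IsTwistingPair K α β φ ψ)
    (hφb : Semiconj₂ φ b b) (hψb : Semiconj₂ ψ b b)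
    (hφt : Semiconj₂ φ t t) (hψt : Semiconj₂ ψ t t) :
    IsBiHomPostLie K (bicompl b φ ψ) (bicompl t φ ψ) (α ∘ φ) (β ∘ ψ) := by
  obtain ⟨hb, ht, hαt, hβt, hder, hassoc⟩ := h
  have hb' := hb.twist htw hφb hψb
  have ⟨hφ, hψ, hφψ, hφα, hφβ, hψα, hψβ⟩ := htw
  refine ⟨hb', ht.bicompl hφ hψ, htw.semiconj₂_comp_left hαt hφt,
    htw.semiconj₂_comp_right hβt hψt, fun x y z => ?_, fun x y z => ?_⟩
  · simpa only [Function.bicompl, Function.comp_apply, hφt.eq, hψt.eq, hψb.eq, hφα.eq, hφβ.eq,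
      hφψ.eq, hψα.eq, hψβ.eq] using hder (φ (φ (ψ x))) (φ (ψ y)) (ψ (ψ z))
  · simpa only [Function.bicompl, Function.comp_apply, hφt.eq, hψt.eq, hφb.eq, hφα.eq, hφβ.eq,
      hφψ.eq, hψα.eq, hψβ.eq] using hassoc (φ (φ (ψ x))) (φ (φ (ψ y))) (ψ (ψ z))

theorem isBiHomLie_id_iff : IsBiHomLie K b id id ↔ IsLieBracket K b :=
  ⟨fun ⟨hb, _, _, _, _, _, hskew, hjacobi⟩ => ⟨hb, hskew, hjacobi⟩,
    fun ⟨hb, hskew, hjacobi⟩ => ⟨hb, LinearMap.id.isLinear, LinearMap.id.isLinear, fun _ => rfl,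
      fun _ _ => rfl, fun _ _ => rfl, hskew, hjacobi⟩⟩

theorem IsBiHomPostLie.isPostLie (h : IsBiHomPostLie K b t id id) : IsPostLie K b t :=
  let ⟨hb, ht, _, _, hder, hassoc⟩ := h
  ⟨isBiHomLie_id_iff.1 hb, ht, hder, hassoc⟩

theorem IsLieBracket.isBiHomLie_bicompl (h : IsLieBracket K b)
    (hα : IsLinearMap K α) (hβ : IsLinearMap K β) (hαβ : Commute α β)
    (hαb : Semiconj₂ α b b) (hβb : Semiconj₂ β b b) : IsBiHomLie K (bicompl b α β) α β :=
  (isBiHomLie_id_iff.2 h).twist (isTwistingPair_id hα hβ hαβ) hαb hβb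

theorem IsBiHomPostLie.isPostLie_bicompl_inverse (h : IsBiHomPostLie K b t α β)
    (hα'l : LeftInverse α' α) (hα'r : RightInverse α' α)
    (hβ'l : LeftInverse β' β) (hβ'r : RightInverse β' β) :
    IsPostLie K (bicompl b α' β') (bicompl t α' β') := by
  have ⟨⟨_, hα, hβ, hαβ, hαb, hβb, _, _⟩, _, hαt, hβt, _, _⟩ := h
  have hinv := isTwistingPair_inverse hα hβ hαβ hα'l hα'r hβ'l hβ'r
  have htwist := h.twist hinv (semiconj₂_of_inverse hαb hα'l hα'r)
    (semiconj₂_of_inverse hβb hβ'l hβ'r) (semiconj₂_of_inverse hαt hα'l hα'r)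
    (semiconj₂_of_inverse hβt hβ'l hβ'r)
  rw [hα'r.comp_eq_id, hβ'r.comp_eq_id] at htwist
  exact htwist.isPostLie

end Twist

section Semidirect

variable {K A V : Type*} [Field K] [AddCommGroup V] [Module K V]

/-- The bracket of the semidirect product `A ⋉ V` of the Lie algebras `(A, c)` and `(V, b)`, where
`A` acts on `V` through `ρ`. -/
def semidirectBracket (c : A → A → A) (ρ : A → V → V) (b : V → V → V) (p q : A × V) : A × V :=
  (c p.1 q.1, ρ p.1 q.2 - ρ q.1 p.2 + b p.2 q.2)

variable {c : A → A → A} {ρ : A → V → V} {b : V → V → V}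

theorem semiconj₂_semidirectBracket {φ : A → A} {χ : V → V} (hχ : IsLinearMap K χ)
    (hc : Semiconj₂ φ c c) (hρ : ∀ x v, χ (ρ x v) = ρ (φ x) (χ v)) (hb : Semiconj₂ χ b b) :
    Semiconj₂ (Prod.map φ χ) (semidirectBracket c ρ b) (semidirectBracket c ρ b) := fun p q => by
  simp only [semidirectBracket, Prod.map, hc.eq, hχ.map_add, hχ.map_sub, hρ, hb.eq]

variable [AddCommGroup A] [Module K A]

theorem isBilin_semidirectBracket (hc : IsBilin K c) (hρ_right : ∀ x, IsLinearMap K (ρ x))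
    (hρ_left : ∀ v, IsLinearMap K fun x => ρ x v) (hb : IsBilin K b) :
    IsBilin K (semidirectBracket c ρ b) := by
  obtain ⟨hc_left, hc_right⟩ := hc
  obtain ⟨hb_left, hb_right⟩ := hb
  refine ⟨fun q => ⟨fun p p' => ?_, fun k p => ?_⟩, fun p => ⟨fun q q' => ?_, fun k q => ?_⟩⟩ <;>
    ext <;>
    simp only [semidirectBracket, Prod.fst_add, Prod.snd_add, Prod.smul_fst, Prod.smul_snd,
      (hc_left _).map_add, (hc_left _).map_smul, (hc_right _).map_add, (hc_right _).map_smul,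
      (hρ_left _).map_add, (hρ_left _).map_smul, (hρ_right _).map_add, (hρ_right _).map_smul,
      (hb_left _).map_add, (hb_left _).map_smul, (hb_right _).map_add, (hb_right _).map_smul,
      smul_add, smul_sub] <;>
    abel

theorem isLieBracket_semidirectBracket (hc : IsLieBracket K c) (hρ : IsLieRep K c ρ)
    (hb : IsLieBracket K b) (hder : ∀ x u v, ρ x (b u v) = b (ρ x u) v + b u (ρ x v)) :
    IsLieBracket K (semidirectBracket c ρ b) := by
  obtain ⟨hc_bilin, hc_skew, hc_jacobi⟩ := hc
  obtain ⟨hρ_right, hρ_left, hρ_lie⟩ := hρ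
  obtain ⟨hb_bilin, hb_skew, hb_jacobi⟩ := hb
  refine ⟨isBilin_semidirectBracket hc_bilin hρ_right hρ_left hb_bilin, fun p q => ?_,
    fun p q r => ?_⟩
  · ext
    · exact hc_skew p.1 q.1
    · simp only [semidirectBracket, Prod.snd_neg, hb_skew p.2 q.2]
      abel
  · ext
    · exact hc_jacobi p.1 q.1 r.1
    · have hb_cyclic : b p.2 (b q.2 r.2) = -b q.2 (b r.2 p.2) - b r.2 (b p.2 q.2) := by
        rw [← sub_eq_zero, ← hb_jacobi p.2 q.2 r.2]
        abel
      simp only [semidirectBracket, Prod.snd_add, Prod.snd_zero, hρ_lie, hder, hb_cyclic,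
        (hρ_right _).map_add, (hρ_right _).map_sub, (hb_bilin.2 _).map_add,
        (hb_bilin.2 _).map_sub]
      rw [hb_skew (ρ p.1 q.2) r.2, hb_skew (ρ q.1 r.2) p.2, hb_skew (ρ r.1 p.2) q.2]
      abel

end Semidirect

section SubAdjacent

variable {A : Type*} [AddCommGroup A]

/-- The bracket `x ▷ y - y ▷ x + [x, y]` of the sub-adjacent Lie algebra of a post-Lie algebra with
bracket `b` and product `t`. -/
def subAdjacentBracket (b t : A → A → A) (x y : A) : A :=
  t x y - t y x + b x y

/-- The double bracket on `A × A` of a post-Lie algebra `(A, b, t)`: the semidirect product of the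
sub-adjacent Lie algebra, acting through `t`, with the Lie algebra `(A, b)`. -/
def doubleBracket (b t : A → A → A) : A × A → A × A → A × A :=
  semidirectBracket (subAdjacentBracket b t) t b

variable {b t : A → A → A}

theorem bicompl_doubleBracket_bicompl {α β α' β' : A → A} (hα'α : LeftInverse α' α)
    (hβ'β : LeftInverse β' β) (hβ'α : Commute β' α) :
    bicompl (doubleBracket (bicompl b α' β') (bicompl t α' β')) (Prod.map α α) (Prod.map β β) =
      fun p q => (t p.1 q.1 - t (α' (β q.1)) (α (β' p.1)) + b p.1 q.1,
        t p.1 q.2 - t (α' (β q.1)) (α (β' p.2)) + b p.2 q.2) := by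
  funext p q
  simp only [doubleBracket, semidirectBracket, subAdjacentBracket, bicompl, Prod.map, hα'α.eq,
    hβ'β.eq, hβ'α.eq]

variable {K : Type*} [Field K] [Module K A]

theorem isBilin_subAdjacentBracket (hb : IsBilin K b) (ht : IsBilin K t) :
    IsBilin K (subAdjacentBracket b t) := by
  obtain ⟨hb_left, hb_right⟩ := hb
  obtain ⟨ht_left, ht_right⟩ := ht
  refine ⟨fun y => ⟨fun x x' => ?_, fun k x => ?_⟩, fun x => ⟨fun y y' => ?_, fun k y => ?_⟩⟩ <;>
    simp only [subAdjacentBracket, (hb_left _).map_add, (hb_left _).map_smul,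
      (hb_right _).map_add, (hb_right _).map_smul, (ht_left _).map_add, (ht_left _).map_smul,
      (ht_right _).map_add, (ht_right _).map_smul, smul_add, smul_sub] <;>
    abel

theorem IsPostLie.isLieRep_subAdjacentBracket (h : IsPostLie K b t) :
    IsLieRep K (subAdjacentBracket b t) t := by
  obtain ⟨-, ⟨ht_left, ht_right⟩, -, hassoc⟩ := h
  refine ⟨ht_right, ht_left, fun x y v => ?_⟩
  simp only [subAdjacentBracket, (ht_left v).map_add, (ht_left v).map_sub, hassoc]
  abel

theorem IsPostLie.isLieBracket_subAdjacentBracket (h : IsPostLie K b t) :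
    IsLieBracket K (subAdjacentBracket b t) := by
  have ⟨_, _, ht_lie⟩ := h.isLieRep_subAdjacentBracket
  obtain ⟨⟨hb, hskew, hjacobi⟩, ht, hder, -⟩ := h
  refine ⟨isBilin_subAdjacentBracket hb ht, fun x y => ?_, fun x y z => ?_⟩
  · simp only [subAdjacentBracket, hskew x y]
    abel
  · have hnested (x y z : A) : subAdjacentBracket b t x (subAdjacentBracket b t y z) =
        t x (t y z) - t x (t z y) + (b (t x y) z + b y (t x z)) -
          (t y (t z x) - t z (t y x)) + (b x (t y z) - b x (t z y) + b x (b y z)) := by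
      rw [← ht_lie y z x, ← hder x y z]
      simp only [subAdjacentBracket, (ht.2 _).map_add, (ht.2 _).map_sub, (hb.2 _).map_add,
        (hb.2 _).map_sub]
    have hb_cyclic : b x (b y z) = -b y (b z x) - b z (b x y) := by
      rw [← sub_eq_zero, ← hjacobi x y z]
      abel
    rw [hnested, hnested, hnested, hb_cyclic, hskew (t x y) z, hskew (t y z) x, hskew (t z x) y]
    abel

theorem IsPostLie.isLieBracket_doubleBracket (h : IsPostLie K b t) :
    IsLieBracket K (doubleBracket b t) :=
  let ⟨hb, _, hder, _⟩ := h
  isLieBracket_semidirectBracket h.isLieBracket_subAdjacentBracket h.isLieRep_subAdjacentBracket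
    hb hder

theorem semiconj₂_doubleBracket {φ : A → A} (hφ : IsLinearMap K φ) (hb : Semiconj₂ φ b b)
    (ht : Semiconj₂ φ t t) :
    Semiconj₂ (Prod.map φ φ) (doubleBracket b t) (doubleBracket b t) := by
  refine semiconj₂_semidirectBracket hφ (fun x y => ?_) ht hb
  simp only [subAdjacentBracket, hφ.map_add, hφ.map_sub, ht.eq, hb.eq]

end SubAdjacent

theorem double_bracket_biHomLie_general {K A : Type*} [Field K]
    [AddCommGroup A] [Module K A] (b t : A → A → A) (α β α' β' : A → A)
    (h : IsBiHomPostLie K b t α β)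
    (hαα' : ∀ x, α (α' x) = x) (hα'α : ∀ x, α' (α x) = x)
    (hββ' : ∀ x, β (β' x) = x) (hβ'β : ∀ x, β' (β x) = x) :
    IsBiHomLie K
      (fun p q : A × A =>
        (t p.1 q.1 - t (α' (β q.1)) (α (β' p.1)) + b p.1 q.1,
         t p.1 q.2 - t (α' (β q.1)) (α (β' p.2)) + b p.2 q.2))
      (fun p => (α p.1, α p.2)) (fun p => (β p.1, β p.2)) := by
  have ⟨⟨_, hα, hβ, hαβ, hαb, hβb, _, _⟩, _, hαt, hβt, _, _⟩ := h
  have ⟨_, _, _, hα'α_comm, hα'β, hβ'α, hβ'β_comm⟩ :=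
    isTwistingPair_inverse hα hβ hαβ hα'α hαα' hβ'β hββ'
  have hdouble : IsLieBracket K (doubleBracket (bicompl b α' β') (bicompl t α' β')) :=
    (h.isPostLie_bicompl_inverse hα'α hαα' hβ'β hββ').isLieBracket_doubleBracket
  have hα_double := semiconj₂_doubleBracket hα
    (semiconj₂_bicompl hαb hα'α_comm.symm hβ'α.symm)
    (semiconj₂_bicompl hαt hα'α_comm.symm hβ'α.symm)
  have hβ_double := semiconj₂_doubleBracket hβ
    (semiconj₂_bicompl hβb hα'β.symm hβ'β_comm.symm)
    (semiconj₂_bicompl hβt hα'β.symm hβ'β_comm.symm)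
  rw [← bicompl_doubleBracket_bicompl hα'α hβ'β hβ'α]
  exact hdouble.isBiHomLie_bicompl (isLinearMap_prodMap hα hα) (isLinearMap_prodMap hβ hβ)
    (fun p => Prod.ext (hαβ p.1) (hαβ p.2)) hα_double hβ_double

/-- the double bracket on `A × A` of a regular BiHom-post-Lie
algebra is a BiHom-Lie bracket. -/
theorem double_bracket_biHomLie {K A : Type*} [Field K] [CharZero K]
    [AddCommGroup A] [Module K A] (b t : A → A → A) (α β α' β' : A → A)
    (h : IsBiHomPostLie K b t α β)
    (hαα' : ∀ x, α (α' x) = x) (hα'α : ∀ x, α' (α x) = x)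
    (hββ' : ∀ x, β (β' x) = x) (hβ'β : ∀ x, β' (β x) = x) :
    IsBiHomLie K
      (fun p q : A × A =>
        (t p.1 q.1 - t (α' (β q.1)) (α (β' p.1)) + b p.1 q.1,
         t p.1 q.2 - t (α' (β q.1)) (α (β' p.2)) + b p.2 q.2))
      (fun p => (α p.1, α p.2)) (fun p => (β p.1, β p.2)) :=
  double_bracket_biHomLie_general b t α β α' β' h hαα' hα'α hββ' hβ'β
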